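/- arXiv:2407.02597 — 7 statements merged into one kernel-verified Lean document; each statement's English description precedes it below -/
import Mathlib

section
/- Let L/K be a finite Galois extension of fields with Galois group G = Gal(L/K). The assignment sending g ∈ G and a Brauer class [D] ∈ Br(L) to the class [D_{g⁻¹}] of the (g⁻¹)-twist of D is well defined and gives a group action of G on Br(L) in which every g acts by a group automorphism of Br(L); in particular, for every g ∈ G and all finite-dimensional central simple L-algebras A, B there is an L-algebra isomorphism (A ⊗_L B)_g ≅ A_g ⊗_L B_g. -/
/-!
Twisting does not change the underlying ring; it only precomposes the structure map with `g`.
Hence every claim asks for a ring isomorphism that intertwines the structure maps.  For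
well-definedness, the unit law and compatibility it is the given isomorphism or the identity
(using `(h * g)⁻¹ l = g⁻¹ (h⁻¹ l)`).

For tensor products the two sides are tensor products over `L` for different actions, so the
isomorphism is built from universal properties: `A_g ⊗ B_g → (A ⊗ B)_g` is the lift of the two
inclusions, and a map `A ⊗ B → (A_g ⊗ B_g)_{g⁻¹}` in the opposite direction is obtained likewise.
As ring homomorphisms both send `a ⊗ b` to `a ⊗ b`, so they are mutually inverse.
-/

open TensorProduct

universe v

/-- The `g`-twist of an `L`-algebra `D`: the same `K`-algebra `D`, with the `L`-algebra
structure whose structure map is `(algebraMap L D) ∘ g`. -/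
def Twist (K L : Type*) [Field K] [Field L] [Algebra K L] (_g : L ≃ₐ[K] L)
    (D : Type*) : Type _ := D

instance (K L : Type*) [Field K] [Field L] [Algebra K L] (g : L ≃ₐ[K] L)
    (D : Type*) [Ring D] : Ring (Twist K L g D) := inferInstanceAs (Ring D)

/-- `l ∈ L` acts on the twist as the original image of `g l`. -/
instance (K L : Type*) [Field K] [Field L] [Algebra K L] (g : L ≃ₐ[K] L)
    (D : Type*) [Ring D] [Algebra L D] : Algebra L (Twist K L g D) :=
  RingHom.toAlgebra' ((algebraMap L D).comp g.toAlgHom.toRingHom)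
    (fun c x => Algebra.commutes (R := L) (A := D) (g c) x)

/-- Two `L`-algebras `A` and `B` are Brauer equivalent if there are positive integers `n`, `m`
and an `L`-algebra isomorphism `Mat_{n×n}(A) ≃ Mat_{m×m}(B)`. -/
def BrauerEquiv (L : Type*) [Field L] (A B : Type*) [Ring A] [Ring B]
    [Algebra L A] [Algebra L B] : Prop :=
  ∃ n m : ℕ, 0 < n ∧ 0 < m ∧
    Nonempty (Matrix (Fin n) (Fin n) A ≃ₐ[L] Matrix (Fin m) (Fin m) B)

namespace Twist

variable {K L : Type*} [Field K] [Field L] [Algebra K L]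

/-- The identity map from `D` to its `g`-twist, as a ring isomorphism. -/
def of (g : L ≃ₐ[K] L) (D : Type*) [Ring D] : D ≃+* Twist K L g D := RingEquiv.refl D

lemma algebraMap_eq (g : L ≃ₐ[K] L) (D : Type*) [Ring D] [Algebra L D] (l : L) :
    algebraMap L (Twist K L g D) l = of g D (algebraMap L D (g l)) := rfl

/-- An isomorphism of matrix algebras over `A` and `B` is also one over the twists: reading a
matrix over `A_g` as a matrix over `A` intertwines scalars `l` and `g l`. -/
lemma brauerEquiv (g : L ≃ₐ[K] L) {A B : Type*} [Ring A] [Ring B] [Algebra L A] [Algebra L B]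
    (h : BrauerEquiv L A B) : BrauerEquiv L (Twist K L g A) (Twist K L g B) := by
  obtain ⟨n, m, hn, hm, ⟨e⟩⟩ := h
  refine ⟨n, m, hn, hm, ⟨AlgEquiv.ofRingEquiv
    (f := ((of g A).symm.mapMatrix.trans e.toRingEquiv).trans (of g B).mapMatrix) fun l => ?_⟩⟩
  have hA : (of g A).symm.mapMatrix (algebraMap L (Matrix (Fin n) (Fin n) (Twist K L g A)) l) =
      algebraMap L (Matrix (Fin n) (Fin n) A) (g l) := by
    ext i j
    by_cases hij : i = j <;> simp [Matrix.algebraMap_matrix_apply, hij, algebraMap_eq]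
  have hB : (of g B).mapMatrix (algebraMap L (Matrix (Fin m) (Fin m) B) (g l)) =
      algebraMap L (Matrix (Fin m) (Fin m) (Twist K L g B)) l := by
    ext i j
    by_cases hij : i = j <;> simp [Matrix.algebraMap_matrix_apply, hij, algebraMap_eq]
  rw [RingEquiv.trans_apply, RingEquiv.trans_apply, hA, ← hB]
  exact congrArg _ (e.commutes (g l))

section Tensor

variable (g : L ≃ₐ[K] L) (A B : Type*) [Ring A] [Ring B] [Algebra L A] [Algebra L B]

/-- The `L`-algebra map `A_g ⊗ B_g → (A ⊗ B)_g`, `a ⊗ b ↦ a ⊗ b`. -/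
noncomputable def tensorHom :
    Twist K L g A ⊗[L] Twist K L g B →ₐ[L] Twist K L g (A ⊗[L] B) :=
  Algebra.TensorProduct.lift
    { toRingHom := ((of g (A ⊗[L] B)).toRingHom.comp
        (Algebra.TensorProduct.includeLeft (R := L) (S := L) (A := A) (B := B)).toRingHom).comp
          (of g A).symm.toRingHom
      commutes' := fun l => congrArg (of g (A ⊗[L] B))
        ((Algebra.TensorProduct.includeLeft (R := L) (S := L) (A := A) (B := B)).commutes (g l)) }
    { toRingHom := ((of g (A ⊗[L] B)).toRingHom.comp
        (Algebra.TensorProduct.includeRight (R := L) (A := A) (B := B)).toRingHom).comp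
          (of g B).symm.toRingHom
      commutes' := fun l => congrArg (of g (A ⊗[L] B))
        ((Algebra.TensorProduct.includeRight (R := L) (A := A) (B := B)).commutes (g l)) }
    (fun a b => by
      have h : Commute ((of g A).symm a ⊗ₜ[L] (1 : B)) ((1 : A) ⊗ₜ[L] (of g B).symm b) := by
        simp [Commute, SemiconjBy]
      exact h.map (of g (A ⊗[L] B)))

lemma tensorHom_tmul (a : A) (b : B) :
    tensorHom g A B (of g A a ⊗ₜ of g B b) = of g (A ⊗[L] B) (a ⊗ₜ b) := by
  have h : (a ⊗ₜ[L] (1 : B)) * ((1 : A) ⊗ₜ[L] b) = a ⊗ₜ b := by simp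
  rw [← h, map_mul]
  exact Algebra.TensorProduct.lift_tmul _ _ _ _ _

/-- The map `A ⊗ B → A_g ⊗ B_g`, `a ⊗ b ↦ a ⊗ b`, made `L`-linear by twisting its target by
`g⁻¹`. -/
noncomputable def tensorInv :
    A ⊗[L] B →ₐ[L] Twist K L g⁻¹ (Twist K L g A ⊗[L] Twist K L g B) :=
  Algebra.TensorProduct.lift
    { toRingHom := ((of g⁻¹ (Twist K L g A ⊗[L] Twist K L g B)).toRingHom.comp
        (Algebra.TensorProduct.includeLeft (R := L) (S := L) (A := Twist K L g A)
          (B := Twist K L g B)).toRingHom).comp (of g A).toRingHom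
      commutes' := fun l => by
        have h := (Algebra.TensorProduct.includeLeft (R := L) (S := L) (A := Twist K L g A)
          (B := Twist K L g B)).commutes (g⁻¹ l)
        rw [algebraMap_eq g A, show g (g⁻¹ l) = l from g.apply_symm_apply l] at h
        exact congrArg (of g⁻¹ _) h }
    { toRingHom := ((of g⁻¹ (Twist K L g A ⊗[L] Twist K L g B)).toRingHom.comp
        (Algebra.TensorProduct.includeRight (R := L) (A := Twist K L g A)
          (B := Twist K L g B)).toRingHom).comp (of g B).toRingHom
      commutes' := fun l => by
        have h := (Algebra.TensorProduct.includeRight (R := L) (A := Twist K L g A)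
          (B := Twist K L g B)).commutes (g⁻¹ l)
        rw [algebraMap_eq g B, show g (g⁻¹ l) = l from g.apply_symm_apply l] at h
        exact congrArg (of g⁻¹ _) h }
    (fun a b => by
      have h : Commute (of g A a ⊗ₜ[L] (1 : Twist K L g B))
          ((1 : Twist K L g A) ⊗ₜ[L] of g B b) := by
        simp [Commute, SemiconjBy]
      exact h.map (of g⁻¹ (Twist K L g A ⊗[L] Twist K L g B)))

lemma tensorInv_tmul (a : A) (b : B) :
    tensorInv g A B (a ⊗ₜ b) = of g⁻¹ _ (of g A a ⊗ₜ of g B b) := by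
  have h : (of g A a ⊗ₜ[L] (1 : Twist K L g B)) * ((1 : Twist K L g A) ⊗ₜ[L] of g B b) =
    of g A a ⊗ₜ of g B b := by simp
  rw [← h, map_mul]
  exact Algebra.TensorProduct.lift_tmul _ _ _ _ _

lemma tensorHom_tensorInv (x : A ⊗[L] B) :
    tensorHom g A B ((of g⁻¹ _).symm (tensorInv g A B x)) = of g _ x := by
  induction x with
  | zero => simp
  | add x y hx hy => simp [hx, hy]
  | tmul a b => rw [tensorInv_tmul, RingEquiv.symm_apply_apply, tensorHom_tmul]

lemma tensorInv_tensorHom (x : Twist K L g A ⊗[L] Twist K L g B) :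
    (of g⁻¹ _).symm (tensorInv g A B ((of g _).symm (tensorHom g A B x))) = x := by
  induction x with
  | zero => simp
  | add x y hx hy => simp [hx, hy]
  | tmul a b =>
    obtain ⟨a, rfl⟩ := (of g A).surjective a
    obtain ⟨b, rfl⟩ := (of g B).surjective b
    rw [tensorHom_tmul, RingEquiv.symm_apply_apply, tensorInv_tmul, RingEquiv.symm_apply_apply]

lemma tensorHom_bijective : Function.Bijective (tensorHom g A B) := by
  refine ⟨fun x y hxy => ?_, fun y => ?_⟩
  · rw [← tensorInv_tensorHom g A B x, hxy, tensorInv_tensorHom]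
  · obtain ⟨x, rfl⟩ := (of g _).surjective y
    exact ⟨_, tensorHom_tensorInv g A B x⟩

end Tensor

end Twist

/-- for a finite Galois extension `L/K` with `G = Gal(L/K)`, the assignment
`(g, [D]) ↦ [D_{g⁻¹}]` is well defined on Brauer classes and defines a group action of `G` on
`Br(L)` acting by group automorphisms.  Concretely, on representatives:
(well-definedness) the `g⁻¹`-twist preserves Brauer equivalence;
(unit law) the `1`-twist is `L`-algebra isomorphic to the original algebra;
(compatibility) `(A_{g⁻¹})_{h⁻¹} ≅ A_{(h*g)⁻¹}` as `L`-algebras, so `h • (g • [A]) = (h*g) • [A]`;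
(automorphism, i.e. multiplicativity) `(A ⊗[L] B)_g ≅ A_g ⊗[L] B_g` as `L`-algebras. -/
theorem galois_action_on_brauer (K L : Type*) [Field K] [Field L] [Algebra K L]
    [FiniteDimensional K L] [IsGalois K L] :
    (∀ (g : L ≃ₐ[K] L) (A B : Type v) [Ring A] [Ring B] [Algebra L A] [Algebra L B]
      [FiniteDimensional L A] [Algebra.IsCentral L A] [IsSimpleRing A]
      [FiniteDimensional L B] [Algebra.IsCentral L B] [IsSimpleRing B],
      BrauerEquiv L A B → BrauerEquiv L (Twist K L g⁻¹ A) (Twist K L g⁻¹ B)) ∧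
    (∀ (A : Type v) [Ring A] [Algebra L A]
      [FiniteDimensional L A] [Algebra.IsCentral L A] [IsSimpleRing A],
      Nonempty (Twist K L (1 : L ≃ₐ[K] L)⁻¹ A ≃ₐ[L] A)) ∧
    (∀ (g h : L ≃ₐ[K] L) (A : Type v) [Ring A] [Algebra L A]
      [FiniteDimensional L A] [Algebra.IsCentral L A] [IsSimpleRing A],
      Nonempty (Twist K L h⁻¹ (Twist K L g⁻¹ A) ≃ₐ[L] Twist K L (h * g)⁻¹ A)) ∧
    (∀ (g : L ≃ₐ[K] L) (A B : Type v) [Ring A] [Ring B] [Algebra L A] [Algebra L B]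
      [FiniteDimensional L A] [Algebra.IsCentral L A] [IsSimpleRing A]
      [FiniteDimensional L B] [Algebra.IsCentral L B] [IsSimpleRing B],
      Nonempty (Twist K L g (A ⊗[L] B) ≃ₐ[L] (Twist K L g A ⊗[L] Twist K L g B))) := by
  refine ⟨?_, ?_, ?_, ?_⟩
  · intro g A B _ _ _ _ _ _ _ _ _ _ h
    exact Twist.brauerEquiv g⁻¹ h
  · intro A _ _ _ _ _
    exact ⟨AlgEquiv.ofRingEquiv (f := (Twist.of (1 : L ≃ₐ[K] L)⁻¹ A).symm) fun _ => rfl⟩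
  · intro g h A _ _ _ _ _
    exact ⟨AlgEquiv.ofRingEquiv
      (f := ((Twist.of h⁻¹ (Twist K L g⁻¹ A)).symm.trans (Twist.of g⁻¹ A).symm).trans
        (Twist.of (h * g)⁻¹ A)) fun l => by
          simp [Twist.algebraMap_eq, mul_inv_rev, AlgEquiv.mul_apply]⟩
  · intro g A B _ _ _ _ _ _ _ _ _ _
    exact ⟨(AlgEquiv.ofBijective _ (Twist.tensorHom_bijective g A B)).symm⟩
end

section
/- Let L/K be a finite Galois extension of fields with Galois group G = Gal(L/K), and let D be a finite-dimensional division algebra over L whose center is exactly L. Suppose that for every g ∈ G the g-twist D_g is Brauer equivalent to D. Then D is G-normal: for every g ∈ G there exists a ring automorphism σ of D that is K-linear (a K-algebra automorphism) and satisfies σ(algebraMap L D l) = algebraMap L D (g l) for all l ∈ L. -/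
/-- A nonzero idempotent matrix `p` over a division ring whose corner contains no idempotent other
than `0` and `p` factors as column times row, `p = v * r` with `r * v = 1`. -/
theorem exists_rank_one_factorization {D : Type*} [DivisionRing D] {m : ℕ}
    (p : Matrix (Fin m) (Fin m) D) (hp : p * p = p) (hp0 : p ≠ 0)
    (hidem : ∀ A : Matrix (Fin m) (Fin m) D, p * A = A → A * p = A → A * A = A → A = 0 ∨ A = p) :
    ∃ (v : Matrix (Fin m) Unit D) (r : Matrix Unit (Fin m) D), r * v = 1 ∧ v * r = p := by
  obtain ⟨i, j, hij⟩ : ∃ i j, p i j ≠ 0 := by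
    by_contra! h
    exact hp0 (Matrix.ext h)
  -- `v` is the `j`-th column of `p`; `r` rescales the `i`-th coordinate so that `r * v = 1`.
  let v : Matrix (Fin m) Unit D := p * Matrix.single j () (1 : D)
  let r : Matrix Unit (Fin m) D := Matrix.single () i (p i j)⁻¹
  have hpv : p * v = v := by simp only [v, ← Matrix.mul_assoc, hp]
  have hrv : r * v = 1 := by
    ext a b
    simp [r, v, hij]
  clear_value v r
  have hrpv : r * p * v = 1 := by rw [Matrix.mul_assoc, hpv, hrv]
  refine ⟨v, r * p, hrpv, ?_⟩
  refine (hidem (v * (r * p)) ?_ ?_ ?_).resolve_left ?_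
  · rw [← Matrix.mul_assoc, hpv]
  · rw [Matrix.mul_assoc, Matrix.mul_assoc, hp]
  · rw [Matrix.mul_assoc, ← Matrix.mul_assoc (r * p), hrpv, Matrix.one_mul]
  · intro h0
    have h1 : r * p * (v * (r * p)) * v = 1 := by
      rw [← Matrix.mul_assoc, hrpv, Matrix.one_mul, hrpv]
    rw [h0, Matrix.mul_zero, Matrix.zero_mul] at h1
    exact zero_ne_one (congrFun (congrFun h1 ()) ())

/-- Brauer equivalent division algebras are isomorphic. For `E` only the absence of zero divisors
is used, which lets the lemma apply to a twist without equipping it with a division ring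
structure. -/
theorem algEquiv_of_matrix_algEquiv {L E D : Type*} [Field L] [Ring E] [IsDomain E]
    [Algebra L E] [DivisionRing D] [Algebra L D] {n m : ℕ} (hn : 0 < n)
    (φ : Matrix (Fin n) (Fin n) E ≃ₐ[L] Matrix (Fin m) (Fin m) D) :
    Nonempty (E ≃ₐ[L] D) := by
  let o : Fin n := ⟨0, hn⟩
  let ψ : E → Matrix (Fin m) (Fin m) D := fun e => φ (Matrix.single o o e)
  have ψ_mul : ∀ a b, ψ (a * b) = ψ a * ψ b := fun a b => by simp [ψ, ← map_mul]
  have ψ_inj : ∀ a, ψ a = 0 → a = 0 := fun a ha => by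
    have h := congrFun (congrFun ((map_eq_zero_iff φ φ.injective).1 ha) o) o
    simpa using h
  -- `ψ` maps `E` onto the corner cut out by the idempotent `ψ 1`.
  have ψ_surj : ∀ A, ψ 1 * A = A → A * ψ 1 = A → ∃ a, ψ a = A := fun A h1 h2 => by
    refine ⟨φ.symm A o o, ?_⟩
    have h : ψ 1 * φ (φ.symm A) * ψ 1 = A := by rw [φ.apply_symm_apply, h1, h2]
    simpa only [ψ, ← map_mul, Matrix.single_mul_mul_single, one_mul, mul_one] using h
  obtain ⟨v, r, hrv, hvr⟩ := exists_rank_one_factorization (ψ 1)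
    (by rw [← ψ_mul, one_mul]) (fun h => one_ne_zero (ψ_inj 1 h)) (by
      intro A h1 h2 hA
      obtain ⟨a, rfl⟩ := ψ_surj A h1 h2
      have h3 : ψ (a * (a - 1)) = 0 := by
        have : ψ (a * (a - 1)) = ψ (a * a) - ψ a := by
          rw [eq_sub_iff_add_eq, ← map_add, ← Matrix.single_add]
          simp [ψ, mul_sub]
        rw [this, ψ_mul, hA, sub_self]
      rcases mul_eq_zero.1 (ψ_inj _ h3) with h | h
      · left
        simp [h, ψ]
      · right
        rw [sub_eq_zero.1 h])
  have hl : ∀ a, v * (r * ψ a) = ψ a := fun a => by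
    rw [← Matrix.mul_assoc, hvr, ← ψ_mul, one_mul]
  have hr : ∀ a, ψ a * v * r = ψ a := fun a => by
    rw [Matrix.mul_assoc, hvr, ← ψ_mul, mul_one]
  let F : E →ₗ[L] D :=
    { toFun := fun e => (r * ψ e * v) () ()
      map_add' := fun a b => by
        simp [ψ, Matrix.single_add, Matrix.mul_add, Matrix.add_mul]
      map_smul' := fun l a => by
        have : ψ (l • a) = l • ψ a := by simp [ψ, ← Matrix.smul_single]
        simp [this] }
  have F_one : F 1 = 1 := by
    change (r * ψ 1 * v) () () = 1
    rw [← hvr, ← Matrix.mul_assoc, hrv, Matrix.one_mul, hrv, Matrix.one_apply_eq]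
  have F_mul : ∀ a b, F (a * b) = F a * F b := fun a b => by
    have h : r * ψ (a * b) * v = (r * ψ a * v) * (r * ψ b * v) := by
      rw [ψ_mul, Matrix.mul_assoc _ v, ← Matrix.mul_assoc v, hl]
      simp only [Matrix.mul_assoc]
    change (r * ψ (a * b) * v) () () = _
    rw [h, Matrix.mul_apply]
    simp [F]
  refine ⟨AlgEquiv.ofBijective (AlgHom.ofLinearMap F F_one F_mul) ⟨?_, ?_⟩⟩
  · refine (injective_iff_map_eq_zero _).2 fun a ha => ψ_inj a ?_
    have h0 : r * ψ a * v = 0 := by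
      ext i j
      exact ha
    rw [← hr a, ← hl a, Matrix.mul_assoc v, Matrix.mul_assoc, h0]
    simp
  · intro d
    let A := v * (Matrix.of fun _ _ : Unit => d) * r
    obtain ⟨a, ha⟩ := ψ_surj A
      (by simp only [A, ← hvr, ← Matrix.mul_assoc]
          rw [Matrix.mul_assoc v r v, hrv, Matrix.mul_one])
      (by simp only [A, ← hvr, Matrix.mul_assoc]
          rw [← Matrix.mul_assoc r v r, hrv, Matrix.one_mul])
    refine ⟨a, ?_⟩
    change (r * ψ a * v) () () = d
    have h : r * A * v = Matrix.of fun _ _ : Unit => d := by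
      simp only [A, Matrix.mul_assoc]
      rw [hrv, Matrix.mul_one, ← Matrix.mul_assoc, hrv, Matrix.one_mul]
    rw [ha, h, Matrix.of_apply]

/-- if `L/K` is finite Galois with group `G`, `D` is a finite-dimensional central
division algebra over `L`, and every Galois twist `D_g` is Brauer equivalent to `D`, then `D` is
`G`-normal: every `g ∈ G` lifts to a `K`-algebra automorphism of `D` extending `g`. -/
theorem fixed_point_is_G_normal (K L : Type*) [Field K] [Field L] [Algebra K L]
    [FiniteDimensional K L] [IsGalois K L]
    (D : Type*) [DivisionRing D] [Algebra L D] [FiniteDimensional L D]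
    [Algebra.IsCentral L D] [Algebra K D] [IsScalarTower K L D]
    (h : ∀ g : L ≃ₐ[K] L, BrauerEquiv L (Twist K L g D) D) :
    ∀ g : L ≃ₐ[K] L, ∃ σ : D ≃ₐ[K] D,
      ∀ l : L, σ (algebraMap L D l) = algebraMap L D (g l) := by
  intro g
  obtain ⟨n, m, hn, -, ⟨φ⟩⟩ := h g
  have : IsDomain (Twist K L g D) := inferInstanceAs (IsDomain D)
  obtain ⟨f⟩ := algEquiv_of_matrix_algEquiv hn φ
  let s : D ≃+* D := f.symm.toRingEquiv
  have hs : ∀ l : L, s (algebraMap L D l) = algebraMap L D (g l) := fun l => f.symm.commutes l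
  refine ⟨AlgEquiv.ofRingEquiv (f := s) fun k => ?_, hs⟩
  rw [IsScalarTower.algebraMap_apply K L D, hs, g.commutes]
end

section
/- Let L/K be a finite Galois extension of fields with Galois group G = Gal(L/K), let D be a finite-dimensional central simple L-algebra, let σ be a family of lifts for D, and let r : G × G → Dˣ satisfy r(a,b) · σ_{ab}(d) = σ_a(σ_b(d)) · r(a,b) for all a, b ∈ G and d ∈ D. Then for all a, b, c ∈ G the element δ(r)(a,b,c) := r(ab,c)⁻¹ · r(a,b)⁻¹ · σ_a(r(b,c)) · r(a,bc) of Dˣ lies in the image of algebraMap L D; consequently there is a unique element ω(a,b,c) ∈ Lˣ with algebraMap L D (ω(a,b,c)) = δ(r)(a,b,c). -/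
/-!
Both `u = r(a,b) · r(ab,c)` and `v = σ_a(r(b,c)) · r(a,bc)` intertwine `σ_{abc}` with
`σ_a ∘ σ_b ∘ σ_c`, so `δ(r)(a,b,c) = u⁻¹ v` commutes with every `σ_{abc}(d)`. As `σ_{abc}` is
surjective, `u⁻¹ v` is central in `D`, hence a scalar, and it is nonzero because it is a unit.
Uniqueness is injectivity of `L → D`.
-/

/-- with `L/K` finite Galois with group `G`, `D` a finite-dimensional central simple
`L`-algebra, `σ` a family of lifts for `D`, and `r : G × G → Dˣ` satisfying
`r(a,b) · σ_{ab}(d) = σ_a(σ_b(d)) · r(a,b)`, the element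
`δ(r)(a,b,c) = r(ab,c)⁻¹ · r(a,b)⁻¹ · σ_a(r(b,c)) · r(a,bc)` is central, i.e. there is a unique
`ω(a,b,c) ∈ Lˣ` with `algebraMap L D (ω(a,b,c)) = δ(r)(a,b,c)`. -/
theorem teichmuller_coboundary_is_central (K L : Type*) [Field K] [Field L] [Algebra K L]
    [FiniteDimensional K L] [IsGalois K L]
    (D : Type*) [Ring D] [Algebra L D] [FiniteDimensional L D]
    [Algebra.IsCentral L D] [IsSimpleRing D] [Algebra K D] [IsScalarTower K L D]
    (σ : (L ≃ₐ[K] L) → (D ≃ₐ[K] D))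
    (hσ : ∀ (a : L ≃ₐ[K] L) (l : L), σ a (algebraMap L D l) = algebraMap L D (a l))
    (r : (L ≃ₐ[K] L) × (L ≃ₐ[K] L) → Dˣ)
    (hr : ∀ (a b : L ≃ₐ[K] L) (d : D),
      (r (a, b) : D) * σ (a * b) d = σ a (σ b d) * (r (a, b) : D)) :
    ∀ a b c : L ≃ₐ[K] L, ∃! ω : Lˣ,
      algebraMap L D (ω : L) =
        (((r (a * b, c))⁻¹ : Dˣ) : D) * (((r (a, b))⁻¹ : Dˣ) : D) * σ a (r (b, c) : D) *
          (r (a, b * c) : D) := by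
  intro a b c
  let u : Dˣ := r (a, b) * r (a * b, c)
  let v : Dˣ := Units.map (σ a : D →* D) (r (b, c)) * r (a, b * c)
  have hδ : (((r (a * b, c))⁻¹ : Dˣ) : D) * (((r (a, b))⁻¹ : Dˣ) : D) * σ a (r (b, c) : D) *
      (r (a, b * c) : D) = ((u⁻¹ * v : Dˣ) : D) := by
    simp [u, v, mul_assoc]
  have hu : ∀ d, (u : D) * σ (a * b * c) d = σ a (σ b (σ c d)) * (u : D) := by
    intro d
    simp only [u, Units.val_mul]
    rw [mul_assoc, hr, ← mul_assoc, hr, mul_assoc]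
  have hv : ∀ d, (v : D) * σ (a * b * c) d = σ a (σ b (σ c d)) * (v : D) := by
    intro d
    change σ a (r (b, c) : D) * (r (a, b * c) : D) * σ (a * b * c) d =
      σ a (σ b (σ c d)) * (σ a (r (b, c) : D) * (r (a, b * c) : D))
    rw [mul_assoc a b c, mul_assoc, hr, ← mul_assoc, ← map_mul, hr, map_mul, mul_assoc]
  clear_value u v
  have hcomm : ∀ d, d * ((u⁻¹ * v : Dˣ) : D) = ((u⁻¹ * v : Dˣ) : D) * d := by
    intro d
    obtain ⟨e, rfl⟩ := (σ (a * b * c)).surjective d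
    apply u.isUnit.mul_left_cancel
    rw [← mul_assoc, hu, Units.val_mul, mul_assoc, Units.mul_inv_cancel_left, mul_assoc,
      Units.mul_inv_cancel_left, hv]
  obtain ⟨l, hl⟩ := Algebra.mem_bot.mp
    (Algebra.IsCentral.out (K := L) (Subalgebra.mem_center_iff.mpr hcomm))
  have hl0 : l ≠ 0 := by
    rintro rfl
    rw [map_zero] at hl
    exact (u⁻¹ * v).ne_zero hl.symm
  rw [hδ]
  refine ⟨Units.mk0 l hl0, hl, fun w hw => Units.ext ?_⟩
  exact (algebraMap L D).injective (hw.trans hl.symm)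
end

section
/- Let L/K be a finite Galois extension of fields with Galois group G = Gal(L/K), let D be a finite-dimensional central simple L-algebra, let σ be a family of lifts for D, and let r : G × G → Dˣ satisfy r(a,b) · σ_{ab}(d) = σ_a(σ_b(d)) · r(a,b) for all a, b ∈ G and d ∈ D. Let ω : G × G × G → Lˣ be the function uniquely determined by algebraMap L D (ω(a,b,c)) = r(ab,c)⁻¹ · r(a,b)⁻¹ · σ_a(r(b,c)) · r(a,bc). Then ω is a Galois 3-cocycle of G with coefficients in Lˣ: for all a, b, c, d ∈ G one has a(ω(b,c,d)) · ω(a, bc, d) · ω(a,b,c) = ω(ab, c, d) · ω(a, b, cd). -/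
/-!
Clearing inverses, `σ_a(r(b,c)) r(a,bc) = ω(a,b,c) r(a,b) r(ab,c)`. The cocycle identity is obtained
by evaluating `σ_a(σ_b(r(c,d))) σ_a(r(b,cd)) r(a,bcd)` in two ways, as a scalar multiple of
`r(a,b) r(ab,c) r(abc,d)`: contracting the first two factors first yields the left-hand side,
while contracting the last two first, and moving `r(a,b)` past `σ_a(σ_b(r(c,d)))` by the
intertwining relation, yields the right-hand side. The product of the values of `r` is a unit and
`L → D` is injective, so the two scalars agree.
-/

/-- with `L/K` finite Galois with group `G`, `D` a finite-dimensional central simple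
`L`-algebra, `σ` a family of lifts, `r : G × G → Dˣ` intertwining `σ_{ab}` and `σ_a ∘ σ_b`, and
`ω : G × G × G → Lˣ` determined by `algebraMap L D (ω(a,b,c)) = r(ab,c)⁻¹·r(a,b)⁻¹·σ_a(r(b,c))·r(a,bc)`,
the function `ω` is a Galois 3-cocycle:
`a(ω(b,c,d)) · ω(a,bc,d) · ω(a,b,c) = ω(ab,c,d) · ω(a,b,cd)`. -/
theorem teichmuller_is_three_cocycle (K L : Type*) [Field K] [Field L] [Algebra K L]
    [FiniteDimensional K L] [IsGalois K L]
    (D : Type*) [Ring D] [Algebra L D] [FiniteDimensional L D]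
    [Algebra.IsCentral L D] [IsSimpleRing D] [Algebra K D] [IsScalarTower K L D]
    (σ : (L ≃ₐ[K] L) → (D ≃ₐ[K] D))
    (hσ : ∀ (a : L ≃ₐ[K] L) (l : L), σ a (algebraMap L D l) = algebraMap L D (a l))
    (r : (L ≃ₐ[K] L) × (L ≃ₐ[K] L) → Dˣ)
    (hr : ∀ (a b : L ≃ₐ[K] L) (d : D),
      (r (a, b) : D) * σ (a * b) d = σ a (σ b d) * (r (a, b) : D))
    (ω : (L ≃ₐ[K] L) × (L ≃ₐ[K] L) × (L ≃ₐ[K] L) → Lˣ)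
    (hω : ∀ a b c : L ≃ₐ[K] L,
      algebraMap L D (ω (a, b, c) : L) =
        (((r (a * b, c))⁻¹ : Dˣ) : D) * (((r (a, b))⁻¹ : Dˣ) : D) * σ a (r (b, c) : D) *
          (r (a, b * c) : D)) :
    ∀ a b c d : L ≃ₐ[K] L,
      a (ω (b, c, d) : L) * (ω (a, b * c, d) : L) * (ω (a, b, c) : L) =
        (ω (a * b, c, d) : L) * (ω (a, b, c * d) : L) := by
  -- The defining relation of `ω`, cleared of inverses.
  have key (a b c : L ≃ₐ[K] L) : σ a (r (b, c) : D) * (r (a, b * c) : D) =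
      (ω (a, b, c) : L) • ((r (a, b) : D) * (r (a * b, c) : D)) := by
    rw [Algebra.smul_def, Algebra.commutes, hω]
    simp only [mul_assoc, Units.mul_inv_cancel_left]
  intro a b c d
  have left : σ a (σ b (r (c, d) : D)) * σ a (r (b, c * d) : D) * (r (a, b * (c * d)) : D) =
      (a (ω (b, c, d) : L) * (ω (a, b * c, d) : L) * (ω (a, b, c) : L)) •
        ((r (a, b) : D) * (r (a * b, c) : D) * (r (a * b * c, d) : D)) := by
    have h := key a (b * c) d
    rw [mul_assoc b c d, ← mul_assoc a b c] at h
    rw [← map_mul, key b c d, Algebra.smul_def, map_mul, hσ, ← Algebra.smul_def, map_mul,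
      smul_mul_assoc, mul_assoc (σ a _), h, mul_smul_comm, ← mul_assoc, key a b c,
      smul_mul_assoc, smul_smul, smul_smul, mul_assoc (a _)]
  have right : σ a (σ b (r (c, d) : D)) * σ a (r (b, c * d) : D) * (r (a, b * (c * d)) : D) =
      ((ω (a * b, c, d) : L) * (ω (a, b, c * d) : L)) •
        ((r (a, b) : D) * (r (a * b, c) : D) * (r (a * b * c, d) : D)) := by
    rw [mul_assoc (σ a (σ b _)), key a b (c * d), mul_smul_comm, ← mul_assoc, ← hr, mul_assoc,
      key (a * b) c d, mul_smul_comm, smul_smul, mul_comm (ω (a, b, c * d) : L),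
      mul_assoc (r (a, b) : D)]
  have h := left.symm.trans right
  rw [← Units.val_mul, ← Units.val_mul, Algebra.smul_def, Algebra.smul_def, Units.mul_left_inj] at h
  exact FaithfulSMul.algebraMap_injective L D h
end

section
/- Let L/K be a finite Galois extension of fields with Galois group G = Gal(L/K), and let A and B be associative unital L-algebras. Then there is a K-algebra isomorphism A ⊗_K B ≅ ∏_{g ∈ G} (A ⊗_L B_g), where B_g denotes the g-twist of B. -/
/-!
Since `L/K` is finite separable, `L ⊗[K] L` contains a separability idempotent `e`
(`Algebra.FormallyUnramified.elem`): `(l ⊗ 1) e = (1 ⊗ l) e`, and multiplication sends `e` to `1`.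
For `g : L ≃ₐ[K] L`, the map `x ⊗ y ↦ x * g y` sends `e` to `1` if `g = 1` and to `0` otherwise
(`evalAt_elem`), because its value `c` satisfies `l * c = g l * c` for every `l`.

Let `E g` (`idem`) be the image of `(1 ⊗ g) e` in `A ⊗[K] B`, and let
`φ g : A ⊗[K] B → A ⊗[L] B_g` (`toTwist`) be the canonical surjection `a ⊗ b ↦ a ⊗ b`. Three facts
show that the `φ g` together form an isomorphism:
* `φ h (E g)` is `1` if `h = g` and `0` otherwise (`toTwist_idem`), which gives surjectivity;
* right multiplication by `E g` factors through `φ g` (`mul_idem_eq_zero`), because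
  `(l ⊗ 1) * E g = (1 ⊗ g l) * E g`;
* `∑ g, E g = 1` (`sum_idem`), because the Galois sum `∑ g, g y` is the trace of `y`, a scalar that
  moves across the tensor sign. With the previous fact this gives injectivity.
-/

open TensorProduct

namespace TwistDecomposition

open Algebra.FormallyUnramified (elem one_tmul_mul_elem lmul_elem)

section Field

variable {K L : Type*} [Field K] [Field L] [Algebra K L]

/-- The `K`-algebra map `L ⊗[K] L → L`, `x ⊗ y ↦ x * g y`. -/
noncomputable def evalAt (g : L ≃ₐ[K] L) : L ⊗[K] L →ₐ[K] L :=
  Algebra.TensorProduct.lift (AlgHom.id K L) g.toAlgHom fun _ _ => Commute.all _ _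

@[simp]
lemma evalAt_tmul (g : L ≃ₐ[K] L) (x y : L) : evalAt g (x ⊗ₜ[K] y) = x * g y := by
  simp [evalAt]

variable [FiniteDimensional K L] [IsGalois K L]

instance formallyUnramified : Algebra.FormallyUnramified K L :=
  Algebra.FormallyUnramified.of_isSeparable K L

open Classical in
lemma evalAt_elem (g : L ≃ₐ[K] L) : evalAt g (elem K L) = if g = 1 then 1 else 0 := by
  split_ifs with hg
  · subst hg
    have h : evalAt (1 : L ≃ₐ[K] L) = Algebra.TensorProduct.lmul' K := by
      ext x <;> simp
    rw [h, lmul_elem]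
  · obtain ⟨l, hl⟩ : ∃ l, g l ≠ l := by
      by_contra! h
      exact hg (AlgEquiv.ext h)
    have h := congrArg (evalAt g) (one_tmul_mul_elem (R := K) (S := L) l)
    simp only [map_mul, evalAt_tmul, one_mul, map_one, mul_one] at h
    by_contra hne
    exact hl (mul_right_cancel₀ hne h)

/-- The translates `(1 ⊗ g) e` of the separability idempotent sum to `1`. -/
lemma sum_map_elem :
    ∑ g : L ≃ₐ[K] L, Algebra.TensorProduct.map (AlgHom.id K L) g.toAlgHom (elem K L) = 1 := by
  classical
  -- Both sides below send `x ⊗ y` to `x ⊗ tr y = x * tr y ⊗ 1`.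
  have key (t : L ⊗[K] L) :
      ∑ g : L ≃ₐ[K] L, Algebra.TensorProduct.map (AlgHom.id K L) g.toAlgHom t =
        (∑ g : L ≃ₐ[K] L, evalAt g t) ⊗ₜ[K] (1 : L) := by
    induction t with
    | zero => simp
    | add s t hs ht =>
      simp only [map_add, Finset.sum_add_distrib, hs, ht, TensorProduct.add_tmul]
    | tmul x y =>
      have htr := trace_eq_sum_automorphisms (K := K) y
      simp only [Algebra.TensorProduct.map_tmul, evalAt_tmul, ← Finset.mul_sum,
        ← TensorProduct.tmul_sum, AlgHom.coe_id, id]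
      erw [← htr]
      rw [Algebra.algebraMap_eq_smul_one, TensorProduct.tmul_smul, mul_smul_comm, mul_one,
        TensorProduct.smul_tmul']
  rw [key]
  simp [evalAt_elem, Algebra.TensorProduct.one_def]

end Field

section Algebra

variable {K L : Type*} [Field K] [Field L] [Algebra K L]
variable (A B : Type*) [Ring A] [Ring B]

/-- The identity of `B`, as a ring homomorphism to its twist. -/
def toTw (g : L ≃ₐ[K] L) : B →+* Twist K L g B := RingHom.id B

/-- The identity of `B`, as a ring homomorphism from its twist. -/
def ofTw (g : L ≃ₐ[K] L) : Twist K L g B →+* B := RingHom.id B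

lemma toTw_surjective (g : L ≃ₐ[K] L) : Function.Surjective (toTw B g) := fun b => ⟨b, rfl⟩

lemma toTw_algebraMap [Algebra L B] (g : L ≃ₐ[K] L) (l : L) :
    toTw B g (algebraMap L B (g l)) = algebraMap L (Twist K L g B) l := rfl

variable [Algebra L A] [Algebra L B]
  [Algebra K A] [IsScalarTower K L A] [Algebra K B] [IsScalarTower K L B]

/-- The map `b ↦ 1 ⊗ b`. It is `K`-linear because `g` fixes `K`. -/
noncomputable def inclRight (g : L ≃ₐ[K] L) : B →ₐ[K] A ⊗[L] Twist K L g B where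
  __ := (Algebra.TensorProduct.includeRight :
    Twist K L g B →ₐ[L] A ⊗[L] Twist K L g B).toRingHom.comp (toTw B g)
  commutes' k := by
    have h : toTw B g (algebraMap K B k) = algebraMap L (Twist K L g B) (algebraMap K L k) := by
      rw [← toTw_algebraMap, AlgEquiv.commutes, ← IsScalarTower.algebraMap_apply]
    change (Algebra.TensorProduct.includeRight :
      Twist K L g B →ₐ[L] A ⊗[L] Twist K L g B) (toTw B g (algebraMap K B k)) = _
    rw [h, AlgHom.commutes, ← IsScalarTower.algebraMap_apply]

/-- The canonical map `φ g : A ⊗[K] B → A ⊗[L] B_g`, `a ⊗ b ↦ a ⊗ b`. -/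
noncomputable def toTwist (g : L ≃ₐ[K] L) : A ⊗[K] B →ₐ[K] A ⊗[L] Twist K L g B :=
  Algebra.TensorProduct.lift
    (Algebra.TensorProduct.includeLeft : A →ₐ[K] A ⊗[L] Twist K L g B) (inclRight A B g)
    fun a b => by
      change (a ⊗ₜ[L] (1 : Twist K L g B)) * ((1 : A) ⊗ₜ[L] toTw B g b) =
        ((1 : A) ⊗ₜ[L] toTw B g b) * (a ⊗ₜ[L] (1 : Twist K L g B))
      simp

lemma toTwist_tmul (g : L ≃ₐ[K] L) (a : A) (b : B) :
    toTwist A B g (a ⊗ₜ[K] b) = a ⊗ₜ[L] toTw B g b := by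
  change (a ⊗ₜ[L] (1 : Twist K L g B)) * ((1 : A) ⊗ₜ[L] toTw B g b) = _
  simp

lemma toTwist_surjective (g : L ≃ₐ[K] L) : Function.Surjective (toTwist A B g) := by
  intro y
  induction y with
  | zero => exact ⟨0, map_zero _⟩
  | add y z hy hz =>
    obtain ⟨y', rfl⟩ := hy
    obtain ⟨z', rfl⟩ := hz
    exact ⟨y' + z', map_add _ _ _⟩
  | tmul a b =>
    obtain ⟨b', rfl⟩ := toTw_surjective B g b
    exact ⟨a ⊗ₜ b', toTwist_tmul A B g a b'⟩

/-- The `K`-algebra map `L ⊗[K] L → A ⊗[K] B`, `x ⊗ y ↦ x ⊗ y`. -/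
noncomputable def base : L ⊗[K] L →ₐ[K] A ⊗[K] B :=
  Algebra.TensorProduct.map (IsScalarTower.toAlgHom K L A) (IsScalarTower.toAlgHom K L B)

/-- On `L ⊗[K] L` the composite `φ h ∘ (1 ⊗ g)` takes values in the scalars `L`: moving
`g y = h (h⁻¹ (g y))` across the tensor sign of `A ⊗[L] B_h` turns it into `h⁻¹ (g y)`. -/
lemma toTwist_base_map (g h : L ≃ₐ[K] L) (t : L ⊗[K] L) :
    toTwist A B h (base A B (Algebra.TensorProduct.map (AlgHom.id K L) g.toAlgHom t)) =
      algebraMap L (A ⊗[L] Twist K L h B) (evalAt (h⁻¹ * g) t) := by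
  induction t with
  | zero => simp
  | add s t hs ht => simp only [map_add, hs, ht]
  | tmul x y =>
    have hy : toTw B h (algebraMap L B (g y)) =
        algebraMap L (Twist K L h B) ((h⁻¹ * g) y) := by
      rw [← toTw_algebraMap, AlgEquiv.mul_apply]
      exact congrArg (fun z => toTw B h (algebraMap L B z)) (h.apply_symm_apply (g y)).symm
    have hl : base A B (Algebra.TensorProduct.map (AlgHom.id K L) g.toAlgHom (x ⊗ₜ[K] y)) =
        algebraMap L A x ⊗ₜ[K] algebraMap L B (g y) := rfl
    rw [hl, toTwist_tmul, hy, evalAt_tmul, Algebra.algebraMap_eq_smul_one (A := Twist K L h B),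
      TensorProduct.tmul_smul, TensorProduct.smul_tmul', Algebra.smul_def, ← map_mul, mul_comm x]
    rfl

variable [FiniteDimensional K L] [IsGalois K L]

/-- The idempotent `E g` of `A ⊗[K] B` that cuts out the factor `A ⊗[L] B_g`. -/
noncomputable def idem (g : L ≃ₐ[K] L) : A ⊗[K] B :=
  base A B (Algebra.TensorProduct.map (AlgHom.id K L) g.toAlgHom (elem K L))

lemma sum_idem : ∑ g : L ≃ₐ[K] L, idem A B g = 1 := by
  simp only [idem, ← map_sum, sum_map_elem, map_one]

open Classical in
lemma toTwist_idem (g h : L ≃ₐ[K] L) :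
    toTwist A B h (idem A B g) = if g = h then 1 else 0 := by
  rw [idem, toTwist_base_map, evalAt_elem]
  simp only [inv_mul_eq_one, eq_comm (a := h)]
  split_ifs
  · exact map_one _
  · exact map_zero _

lemma tmul_one_mul_idem (g : L ≃ₐ[K] L) (l : L) :
    (algebraMap L A l ⊗ₜ[K] (1 : B)) * idem A B g =
      ((1 : A) ⊗ₜ[K] algebraMap L B (g l)) * idem A B g := by
  have h := congrArg
    (fun t => base A B (Algebra.TensorProduct.map (AlgHom.id K L) g.toAlgHom t))
    (one_tmul_mul_elem (R := K) (S := L) l)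
  simp only [map_mul] at h
  simpa [base, idem] using h.symm

/-- Right multiplication by `E g` factors through `φ g`, hence kills the kernel of `φ g`. -/
lemma mul_idem_eq_zero (g : L ≃ₐ[K] L) (x : A ⊗[K] B) (hx : toTwist A B g x = 0) :
    x * idem A B g = 0 := by
  let f : A →+ Twist K L g B →+ A ⊗[K] B :=
    AddMonoidHom.mk'
      (fun a => AddMonoidHom.mk' (fun b => (a ⊗ₜ[K] ofTw B g b) * idem A B g)
        fun b b' => by rw [map_add, TensorProduct.tmul_add, add_mul])
      fun a a' => by
        ext b
        simp [TensorProduct.add_tmul, add_mul]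
  have hf (l : L) (a : A) (b : Twist K L g B) : f (l • a) b = f a (l • b) := by
    obtain ⟨b, rfl⟩ := toTw_surjective B g b
    have hb : l • toTw B g b = toTw B g (b * algebraMap L B (g l)) := by
      rw [Algebra.smul_def, Algebra.commutes, map_mul, toTw_algebraMap]
    rw [hb]
    change ((l • a) ⊗ₜ[K] b) * idem A B g = (a ⊗ₜ[K] (b * algebraMap L B (g l))) * idem A B g
    have h := congrArg (fun t => (a ⊗ₜ[K] b) * t) (tmul_one_mul_idem A B g l)
    simp only [← mul_assoc, Algebra.TensorProduct.tmul_mul_tmul, mul_one] at h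
    rw [← h, Algebra.smul_def, Algebra.commutes]
  let ψ : A ⊗[L] Twist K L g B →+ A ⊗[K] B := TensorProduct.liftAddHom f hf
  have hψ (y : A ⊗[K] B) : ψ (toTwist A B g y) = y * idem A B g := by
    induction y with
    | zero => simp
    | add y z hy hz => rw [map_add, map_add, hy, hz, add_mul]
    | tmul a b =>
      rw [toTwist_tmul]
      rfl
  rw [← hψ, hx, map_zero]

/-- All the maps `φ g` together. -/
noncomputable def toPi :
    A ⊗[K] B →ₐ[K] ((g : L ≃ₐ[K] L) → A ⊗[L] Twist K L g B) :=
  AlgHom.pi fun g => toTwist A B g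

lemma toPi_bijective : Function.Bijective (toPi (K := K) (L := L) A B) := by
  classical
  constructor
  · rw [injective_iff_map_eq_zero]
    intro x hx
    rw [← mul_one x, ← sum_idem (K := K) (L := L) A B, Finset.mul_sum]
    exact Finset.sum_eq_zero fun g _ => mul_idem_eq_zero A B g x (congrFun hx g)
  · intro y
    choose x hx using fun g => toTwist_surjective A B g (y g)
    refine ⟨∑ g, x g * idem A B g, funext fun h => ?_⟩
    change toTwist A B h _ = _
    simp [toTwist_idem, hx]

end Algebra

end TwistDecomposition

/-- for a finite Galois extension `L/K` with group `G = Gal(L/K)` and `L`-algebras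
`A`, `B`, there is a `K`-algebra isomorphism `A ⊗[K] B ≅ ∏_{g ∈ G} (A ⊗[L] B_g)`. -/
theorem tensor_over_K_decomposes (K L : Type*) [Field K] [Field L] [Algebra K L]
    [FiniteDimensional K L] [IsGalois K L]
    (A B : Type*) [Ring A] [Ring B] [Algebra L A] [Algebra L B]
    [Algebra K A] [IsScalarTower K L A] [Algebra K B] [IsScalarTower K L B] :
    Nonempty ((A ⊗[K] B) ≃ₐ[K] ((g : L ≃ₐ[K] L) → (A ⊗[L] Twist K L g B))) := by
  exact ⟨AlgEquiv.ofBijective (TwistDecomposition.toPi A B)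
    (TwistDecomposition.toPi_bijective A B)⟩
end

section
/- Let L/K be a finite Galois extension of fields with Galois group G = Gal(L/K), and let D be a G-normal finite-dimensional division algebra over L with center exactly L, of dimension n = dim_L D. Then for every g ∈ G the L-algebra D ⊗_L (D^op)_g is isomorphic to the matrix algebra Mat_{n×n}(L), and consequently D ⊗_K D^op is isomorphic as a K-algebra to the product of |G| copies of Mat_{n×n}(L). -/
/-!
Choose for each `g` an automorphism `σ_g` of `D` extending `g`, and let `a ⊗ b` in
`D ⊗[K] Dᵐᵒᵖ` act on the `g`-th copy of `D` by `x ↦ a x σ_g(b)`, which is `L`-linear. The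
resulting map `D ⊗[K] Dᵐᵒᵖ → ∏ g, End_L D` is injective (`twisted_relation_trivial`, a
shortest-relation argument finished by surjectivity of the trace of `L/K`), and both sides
have `K`-dimension `(n [L : K])²`, so it is an isomorphism (`piTwistedAction_bijective`). This is
the second claim.

Surjectivity of one component shows that `D ⊗[L] Dᵐᵒᵖ → End_L D` is onto, hence an isomorphism by
dimension (`mulLeftRight_bijective_of_normal`). Since an extension of `g⁻¹` to `D` gives an
`L`-isomorphism `(Dᵐᵒᵖ)_g ≃ Dᵐᵒᵖ` (`untwist`), the first claim follows.
-/

open TensorProduct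

/-- The injectivity statement behind everything: if `b` is `K`-linearly independent and
`∑ aᵢ x σ_g(bᵢ) = 0` for all `x` and `g`, then all `aᵢ` vanish. A relation of minimal support
can be scaled to have some coefficient `1`; taking commutators with `d` shortens it, so its
coefficients lie in the centre `L`. Applying `σ_g⁻¹`, multiplying by conjugates of `m : L` and
summing over `g` turns it into a `K`-linear relation with coefficients `Tr(m lᵢ)`, and
the trace of `L/K` is not zero. -/
lemma twisted_relation_trivial {K L : Type*} [Field K] [Field L] [Algebra K L]
    [FiniteDimensional K L] [IsGalois K L]
    {D : Type*} [DivisionRing D] [Algebra L D]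
    [Algebra.IsCentral L D] [Algebra K D] [IsScalarTower K L D]
    (σ : (L ≃ₐ[K] L) → (D ≃ₐ[K] D))
    (hσ : ∀ g l, σ g (algebraMap L D l) = algebraMap L D (g l))
    {ι : Type*} [Fintype ι] (b : ι → D) (hb : LinearIndependent K b)
    (a : ι → D) (ha : ∀ g x, ∑ i, a i * x * σ g (b i) = 0) : a = 0 := by
  classical
  induction hn : (Finset.univ.filter fun i => a i ≠ 0).card using Nat.strong_induction_on
    generalizing a with
  | _ n ih =>
  by_contra hne
  obtain ⟨j, hj⟩ : ∃ j, a j ≠ 0 := by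
    by_contra! h
    exact hne (funext h)
  set c : ι → D := fun i => (a j)⁻¹ * a i with hc
  have hcj : c j = 1 := inv_mul_cancel₀ hj
  have hcrel : ∀ g x, ∑ i, c i * x * σ g (b i) = 0 := by
    intro g x
    have := congrArg ((a j)⁻¹ * ·) (ha g x)
    simpa [Finset.mul_sum, hc, mul_assoc] using this
  have hcomm : ∀ d i, d * c i - c i * d = 0 := by
    intro d
    refine fun i => congrFun (ih _ ?_ (fun i => d * c i - c i * d) ?_ rfl) i
    · rw [← hn]
      apply Finset.card_lt_card
      refine Finset.ssubset_iff_of_subset ?_ |>.2 ⟨j, by simpa using hj, by simp [hcj]⟩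
      intro i
      simp only [Finset.mem_filter, Finset.mem_univ, true_and]
      contrapose!
      intro h
      simp [hc, h]
    · intro g x
      have h1 := congrArg (d * ·) (hcrel g x)
      have h2 := hcrel g (d * x)
      simp only [Finset.mul_sum, mul_zero] at h1
      rw [← sub_self (0 : D)]
      nth_rw 2 [← h2]
      rw [← h1, ← Finset.sum_sub_distrib]
      exact Finset.sum_congr rfl fun i _ => by noncomm_ring
  have hL : ∀ i, ∃ l : L, algebraMap L D l = c i := by
    intro i
    have : c i ∈ Subalgebra.center L D := by
      rw [Subalgebra.mem_center_iff]
      exact fun d => sub_eq_zero.1 (hcomm d i)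
    rw [Algebra.IsCentral.center_eq_bot] at this
    exact Algebra.mem_bot.1 this
  choose l hl using hL
  have hrel : ∀ g : L ≃ₐ[K] L, ∑ i, algebraMap L D (g (l i)) * b i = 0 := by
    intro g
    apply (σ g⁻¹).injective
    have := hcrel g⁻¹ 1
    simpa [hσ, ← hl, map_sum] using this
  have htr : ∀ m : L, Algebra.trace K L (m * l j) = 0 := by
    intro m
    refine Fintype.linearIndependent_iff.1 hb (fun i => Algebra.trace K L (m * l i)) ?_ j
    have : ∀ i, Algebra.trace K L (m * l i) • b i
        = ∑ g : L ≃ₐ[K] L, algebraMap L D (g m) * (algebraMap L D (g (l i)) * b i) := by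
      intro i
      rw [Algebra.smul_def, IsScalarTower.algebraMap_apply K L D, trace_eq_sum_automorphisms,
        map_sum, Finset.sum_mul]
      simp [mul_assoc]
    simp_rw [this]
    rw [Finset.sum_comm]
    simp [← Finset.mul_sum, hrel]
  have hlj : l j = 1 := (algebraMap L D).injective (by rw [hl, hcj, map_one])
  obtain ⟨m, hm⟩ := Algebra.trace_surjective K L 1
  simpa [hlj, hm] using htr m

/-- The action of `D ⊗[K] Dᵐᵒᵖ` on `D` in which the second factor acts by right
multiplication through `σ`. -/
noncomputable def twistedAction (K L : Type*) [Field K] [Field L] [Algebra K L]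
    (D : Type*) [DivisionRing D] [Algebra L D] [Algebra K D] [IsScalarTower K L D]
    (σ : D ≃ₐ[K] D) : D ⊗[K] Dᵐᵒᵖ →ₐ[K] Module.End L D :=
  Algebra.TensorProduct.lift
    (((AlgHom.mulLeftRight L D).comp Algebra.TensorProduct.includeLeft).restrictScalars K)
    ((((AlgHom.mulLeftRight L D).comp
      Algebra.TensorProduct.includeRight).restrictScalars K).comp (AlgEquiv.op σ).toAlgHom)
    (fun a b => by
      rw [commute_iff_eq]
      ext x
      simp [mul_assoc])

lemma twistedAction_tmul (K L : Type*) [Field K] [Field L] [Algebra K L]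
    (D : Type*) [DivisionRing D] [Algebra L D] [Algebra K D] [IsScalarTower K L D]
    (σ : D ≃ₐ[K] D) (a : D) (b : Dᵐᵒᵖ) (x : D) :
    twistedAction K L D σ (a ⊗ₜ b) x = a * x * σ b.unop := by
  rw [twistedAction, Algebra.TensorProduct.lift_tmul]
  simp [mul_assoc]


open Module in
/-- The actions twisted by the `σ_g` together identify `D ⊗[K] Dᵐᵒᵖ` with `∏ g, End_L D`:
injectivity is `twisted_relation_trivial` for a `K`-basis of `Dᵐᵒᵖ`, and the dimensions agree. -/
lemma piTwistedAction_bijective {K L : Type*} [Field K] [Field L] [Algebra K L]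
    [FiniteDimensional K L] [IsGalois K L]
    {D : Type*} [DivisionRing D] [Algebra L D] [FiniteDimensional L D]
    [Algebra.IsCentral L D] [Algebra K D] [IsScalarTower K L D]
    (σ : (L ≃ₐ[K] L) → (D ≃ₐ[K] D))
    (hσ : ∀ g l, σ g (algebraMap L D l) = algebraMap L D (g l)) :
    Function.Bijective (AlgHom.pi fun g => twistedAction K L D (σ g)) := by
  have : FiniteDimensional K D := FiniteDimensional.trans K L D
  have : FiniteDimensional K (Module.End L D) := FiniteDimensional.trans K L _
  have hinj : Function.Injective (AlgHom.pi fun g => twistedAction K L D (σ g)) := by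
    rw [injective_iff_map_eq_zero]
    intro t ht
    let b := Module.finBasis K Dᵐᵒᵖ
    let B := Algebra.TensorProduct.basis D b
    have hB : t = ∑ i, B.repr t i ⊗ₜ[K] b i := by
      conv_lhs => rw [← B.sum_repr t]
      refine Finset.sum_congr rfl fun i _ => ?_
      simp [B, Algebra.TensorProduct.basis_apply, TensorProduct.smul_tmul']
    have h0 := twisted_relation_trivial σ hσ (fun i => (b i).unop)
      (b.linearIndependent.map' (MulOpposite.opLinearEquiv K).symm.toLinearMap
        (LinearEquiv.ker _)) (fun i => B.repr t i) (by
        intro g x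
        have := LinearMap.congr_fun (congrFun ht g) x
        rw [hB] at this
        simpa [twistedAction_tmul] using this)
    rw [hB]
    exact Finset.sum_eq_zero fun i _ => by
      rw [show B.repr t i = 0 from congrFun h0 i, TensorProduct.zero_tmul]
  refine ⟨hinj, ?_⟩
  -- Both sides have `K`-dimension `(n [L : K])²`, where `n = dim_L D`.
  have hdim : finrank K (D ⊗[K] Dᵐᵒᵖ) = finrank K ((g : L ≃ₐ[K] L) → Module.End L D) := by
    rw [Module.finrank_pi_fintype, Module.finrank_tensorProduct,
      ← (MulOpposite.opLinearEquiv K : D ≃ₗ[K] Dᵐᵒᵖ).finrank_eq,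
      Finset.sum_const, Finset.card_univ, ← Nat.card_eq_fintype_card,
      IsGalois.card_aut_eq_finrank, ← finrank_mul_finrank K L (Module.End L D),
      ← finrank_mul_finrank K L D, Module.finrank_linearMap, smul_eq_mul]
    ring
  exact (LinearMap.injective_iff_surjective_of_finrank_eq_finrank
    (f := (AlgHom.pi fun g => twistedAction K L D (σ g)).toLinearMap) hdim).1 hinj

open Module in
/-- A `G`-normal central division algebra is Azumaya: any single component of the isomorphism
`D ⊗[K] Dᵐᵒᵖ ≃ ∏ g, End_L D` is onto and has image inside that of `AlgHom.mulLeftRight`. -/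
lemma mulLeftRight_bijective_of_normal {K L : Type*} [Field K] [Field L] [Algebra K L]
    [FiniteDimensional K L] [IsGalois K L]
    {D : Type*} [DivisionRing D] [Algebra L D] [FiniteDimensional L D]
    [Algebra.IsCentral L D] [Algebra K D] [IsScalarTower K L D]
    (σ : (L ≃ₐ[K] L) → (D ≃ₐ[K] D))
    (hσ : ∀ g l, σ g (algebraMap L D l) = algebraMap L D (g l)) :
    Function.Bijective (AlgHom.mulLeftRight L D) := by
  have : FiniteDimensional L Dᵐᵒᵖ := Module.Finite.equiv (MulOpposite.opLinearEquiv L)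
  have hsurj : Function.Surjective (AlgHom.mulLeftRight L D) := by
    intro f
    obtain ⟨t, ht⟩ := (piTwistedAction_bijective σ hσ).2 (fun _ => f)
    have ht1 : twistedAction K L D (σ 1) t = f := congrFun ht 1
    rw [← ht1]
    clear ht ht1
    induction t with
    | zero => exact ⟨0, by simp⟩
    | tmul a b =>
      refine ⟨a ⊗ₜ MulOpposite.op (σ 1 b.unop), LinearMap.ext fun x => ?_⟩
      simp [twistedAction_tmul]
    | add s t hs ht =>
      obtain ⟨u, hu⟩ := hs
      obtain ⟨v, hv⟩ := ht
      exact ⟨u + v, by simp [hu, hv]⟩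
  have hdim : finrank L (D ⊗[L] Dᵐᵒᵖ) = finrank L (Module.End L D) := by
    rw [Module.finrank_tensorProduct, Module.finrank_linearMap,
      ← (MulOpposite.opLinearEquiv L : D ≃ₗ[L] Dᵐᵒᵖ).finrank_eq]
  exact ⟨(LinearMap.injective_iff_surjective_of_finrank_eq_finrank
    (f := (AlgHom.mulLeftRight L D).toLinearMap) hdim).2 hsurj, hsurj⟩

/-- An automorphism of `D` extending `g⁻¹` undoes the `g`-twist of `Dᵐᵒᵖ`. -/
def untwist {K L : Type*} [Field K] [Field L] [Algebra K L]
    {D : Type*} [DivisionRing D] [Algebra L D] [Algebra K D]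
    (g : L ≃ₐ[K] L) (τ : D ≃ₐ[K] D)
    (hτ : ∀ l, τ (algebraMap L D l) = algebraMap L D (g⁻¹ l)) :
    Twist K L g Dᵐᵒᵖ ≃ₐ[L] Dᵐᵒᵖ :=
  AlgEquiv.ofRingEquiv (f := (AlgEquiv.op τ : Dᵐᵒᵖ ≃ₐ[K] Dᵐᵒᵖ).toRingEquiv) (fun l => by
    change MulOpposite.op (τ (algebraMap L D (g l))) = MulOpposite.op (algebraMap L D l)
    rw [hτ]
    exact congrArg (fun y => MulOpposite.op (algebraMap L D y)) (g.symm_apply_apply l))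

/-- let `L/K` be finite Galois with group `G`, and `D` a `G`-normal
finite-dimensional central division algebra over `L` of `L`-dimension `n`.  Then for every
`g ∈ G` one has `D ⊗[L] (Dᵐᵒᵖ)_g ≅ Mat_{n×n}(L)` as `L`-algebras, and consequently
`D ⊗[K] Dᵐᵒᵖ` is `K`-algebra isomorphic to the product of `|G|` copies of `Mat_{n×n}(L)`. -/
theorem G_normal_tensor_op_twist_matrix (K L : Type*) [Field K] [Field L] [Algebra K L]
    [FiniteDimensional K L] [IsGalois K L]
    (D : Type*) [DivisionRing D] [Algebra L D] [FiniteDimensional L D]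
    [Algebra.IsCentral L D] [Algebra K D] [IsScalarTower K L D]
    (hnormal : ∀ g : L ≃ₐ[K] L, ∃ σ : D ≃ₐ[K] D,
      ∀ l : L, σ (algebraMap L D l) = algebraMap L D (g l)) :
    (∀ g : L ≃ₐ[K] L,
      Nonempty ((D ⊗[L] Twist K L g Dᵐᵒᵖ) ≃ₐ[L]
        Matrix (Fin (Module.finrank L D)) (Fin (Module.finrank L D)) L)) ∧
    Nonempty ((D ⊗[K] Dᵐᵒᵖ) ≃ₐ[K]
      ((g : L ≃ₐ[K] L) → Matrix (Fin (Module.finrank L D)) (Fin (Module.finrank L D)) L)) := by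
  choose σ hσ using hnormal
  let e : Module.End L D ≃ₐ[L]
      Matrix (Fin (Module.finrank L D)) (Fin (Module.finrank L D)) L :=
    algEquivMatrix (Module.finBasis L D)
  refine ⟨fun g => ⟨?_⟩, ⟨?_⟩⟩
  · exact ((Algebra.TensorProduct.congr AlgEquiv.refl (untwist g (σ g⁻¹) (hσ g⁻¹))).trans
      (AlgEquiv.ofBijective _ (mulLeftRight_bijective_of_normal σ hσ))).trans e
  · exact (AlgEquiv.ofBijective _ (piTwistedAction_bijective σ hσ)).trans
      (AlgEquiv.piCongrRight fun _ => e.restrictScalars K)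
end

section
/- Let K be a field and let D be a finite-dimensional division algebra over K whose center Z(D) is a separable field extension of K. Then there exists a finite Galois extension L of K such that the L-algebra L ⊗_K D is isomorphic to a finite product of matrix algebras over L. -/
/-!
Let `Ω` be the separable closure of `K` inside its algebraic closure. Since `Z(D)` is separable
over `K`, the algebra `Ω ⊗ Z(D)` is isomorphic to `Ωⁿ`. It is the center of `Ω ⊗ D`, and every
nonzero two-sided ideal of `Ω ⊗ D` meets it nontrivially (`exists_mem_commute`). Applied to the
Jacobson radical, which is nilpotent, this shows that `Ω ⊗ D` is semisimple
(`isSemisimpleRing_tensorProduct`). By Wedderburn it is a product of matrix algebras over division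
algebras; these are central over `Ω` because the center is `Ωⁿ`, so they equal `Ω` by the
Jacobson–Noether theorem (`exists_algEquiv_pi_matrix_of_isSepClosed`).

The splitting over `Ω` is determined by finitely many matrix entries, the coordinates of the images
of a `K`-basis of `D`. The normal closure `L` of the field they generate is finite Galois over `K`,
and the splitting descends to `L` (`nonempty_algEquiv_of_entries_mem`).
-/

open TensorProduct

/-- Multiplying by `1 ⊗ d` on the left and `1 ⊗ e` on the right acts coefficientwise on the
expansion of an element of `A ⊗[K] D` along a `K`-basis of `A`. -/
theorem equivFinsuppOfBasisLeft_mul_mul {K A D ι : Type*} [DecidableEq ι] [Field K] [Ring A] [Algebra K A]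
    [Ring D] [Algebra K D] (b : Module.Basis ι K A) (d e : D) (x : A ⊗[K] D) (i : ι) :
    equivFinsuppOfBasisLeft b ((1 ⊗ₜ d) * x * (1 ⊗ₜ e)) i =
      d * equivFinsuppOfBasisLeft b x i * e := by
  induction x using TensorProduct.induction_on with
  | zero => simp
  | tmul a y => simp
  | add x y hx hy => simp [mul_add, add_mul, hx, hy]

/-- A nonzero two-sided ideal of `A ⊗[K] D` contains a nonzero element commuting with `1 ⊗ D`.
Take a nonzero element of the ideal with the fewest nonzero coefficients along a `K`-basis of `A`,
scaled so that one of them is `1`: its commutator with `1 ⊗ d` has fewer, hence is `0`. -/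
theorem exists_mem_commute {K A D : Type*} [Field K] [CommRing A] [Algebra K A]
    [DivisionRing D] [Algebra K D] (I : Ideal (A ⊗[K] D)) [I.IsTwoSided] (hI : I ≠ ⊥) :
    ∃ x ∈ I, x ≠ 0 ∧ ∀ d : D, (1 ⊗ₜ[K] d) * x = x * (1 ⊗ₜ[K] d) := by
  classical
  let b := Module.Basis.ofVectorSpace K A
  let E := equivFinsuppOfBasisLeft (N := D) b
  have hex : ∃ n, ∃ x ∈ I, x ≠ 0 ∧ (E x).support.card = n := by
    obtain ⟨x, hx, hx0⟩ := Submodule.exists_mem_ne_zero_of_ne_bot hI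
    exact ⟨_, x, hx, hx0, rfl⟩
  obtain ⟨x, hx, hx0, hcard⟩ := Nat.find_spec hex
  have hmin : ∀ y ∈ I, (E y).support.card < (E x).support.card → y = 0 := by
    intro y hy hlt
    by_contra hy0
    exact Nat.find_min hex (hcard ▸ hlt) ⟨y, hy, hy0, rfl⟩
  have hEx : E x ≠ 0 := fun h => hx0 (E.map_eq_zero_iff.mp h)
  obtain ⟨j, hj⟩ := Finsupp.ne_iff.mp hEx
  rw [Finsupp.zero_apply] at hj
  have hmul : ∀ (d e : D) (z : A ⊗[K] D) i, E ((1 ⊗ₜ d) * z * (1 ⊗ₜ e)) i = d * E z i * e :=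
    fun d e z i => equivFinsuppOfBasisLeft_mul_mul b d e z i
  have hmulL : ∀ (d : D) (z : A ⊗[K] D) i, E ((1 ⊗ₜ d) * z) i = d * E z i := fun d z i => by
    simpa [← Algebra.TensorProduct.one_def] using hmul d 1 z i
  have hmulR : ∀ (d : D) (z : A ⊗[K] D) i, E (z * (1 ⊗ₜ d)) i = E z i * d := fun d z i => by
    simpa [← Algebra.TensorProduct.one_def] using hmul 1 d z i
  let y : A ⊗[K] D := (1 ⊗ₜ (E x j)⁻¹) * x
  have hyj : E y j = 1 := by rw [hmulL, inv_mul_cancel₀ hj]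
  have hy : y ∈ I := I.mul_mem_left _ hx
  refine ⟨y, hy, fun h => ?_, fun d => ?_⟩
  · rw [h] at hyj; simp at hyj
  refine sub_eq_zero.mp (hmin _ (I.sub_mem (I.mul_mem_left _ hy) (I.mul_mem_right _ hy)) ?_)
  refine Finset.card_lt_card (Finset.ssubset_iff_of_subset ?_ |>.mpr ⟨j, by simpa using hj, ?_⟩)
  · intro i
    simp only [Finsupp.mem_support_iff, map_sub, Finsupp.sub_apply, hmulL, hmulR, y]
    contrapose!
    intro h; simp [h]
  · simp [hmulL, hmulR, hyj]

/-- A finite-dimensional central division algebra over a separably closed field is trivial: by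
Jacobson–Noether it would otherwise contain a noncentral separable element. -/
theorem algebraMap_surjective_of_isCentral {F E : Type*} [Field F] [IsSepClosed F]
    [DivisionRing E] [Algebra F E] [FiniteDimensional F E] [Algebra.IsCentral F E] :
    Function.Surjective (algebraMap F E) := by
  by_contra hns
  have hne : (⊥ : Subalgebra F E) ≠ ⊤ := fun h => hns (Algebra.surjective_algebraMap_iff.mpr h.symm)
  obtain ⟨x, hx, hsep⟩ := JacobsonNoether.exists_separable_and_not_isCentral' hne
  have hdeg := IsSepClosed.degree_eq_one_of_irreducible F (minpoly.irreducible hsep.isIntegral) hsep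
  exact hx (Algebra.mem_bot.mpr (minpoly.mem_range_of_degree_eq_one F x hdeg))

theorem formallyEtale_center (K D : Type*) [Field K] [DivisionRing D] [Algebra K D]
    [FiniteDimensional K D] [h : Algebra.IsSeparable K (Subalgebra.center K D)] :
    Algebra.FormallyEtale K (Subalgebra.center K D) := by
  have : Algebra.IsIntegral K (Subalgebra.center K D) := inferInstance
  have h' : IsField (Subalgebra.center K D) :=
    isField_of_isIntegral_of_isField' (Field.toIsField K)
  let : Field (Subalgebra.center K D) := h'.toField
  have : Algebra.IsSeparable K (Subalgebra.center K D) := h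
  exact Algebra.FormallyEtale.of_isSeparable K (Subalgebra.center K D)

/-- The centralizer of `1 ⊗ D` in `F ⊗[K] D` is the image of `F ⊗[K] Z(D)`. -/
theorem exists_map_center_eq (K F D : Type*) [Field K] [Field F] [Algebra K F] [DivisionRing D] [Algebra K D]
    (x : F ⊗[K] D) (hx : ∀ d : D, (1 ⊗ₜ[K] d) * x = x * (1 ⊗ₜ[K] d)) :
    ∃ y : F ⊗[K] Subalgebra.center K D,
      Algebra.TensorProduct.map (AlgHom.id F F) (Subalgebra.center K D).val y = x := by
  have h := Subalgebra.centralizer_range_includeRight_eq_center_tensorProduct K F D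
  have hmem : x ∈ Subalgebra.centralizer K
     ((Algebra.TensorProduct.includeRight : D →ₐ[K] F ⊗[K] D).range : Set (F ⊗[K] D)) := by
    rw [Subalgebra.mem_centralizer_iff]
    rintro _ ⟨d, rfl⟩
    exact hx d
  rw [h] at hmem
  exact hmem

theorem map_center_injective (K F D : Type*) [Field K] [Field F] [Algebra K F]
    [DivisionRing D] [Algebra K D] : Function.Injective
      (Algebra.TensorProduct.map (AlgHom.id F F) (Subalgebra.center K D).val) :=
  Module.Flat.lTensor_preserves_injective_linearMap (M := F)
    (Subalgebra.center K D).val.toLinearMap Subtype.val_injective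

/-- If its Jacobson radical were nonzero, `F ⊗[K] D` would contain a nonzero nilpotent element of
`F ⊗[K] Z(D)`, which is reduced because `Z(D)` is étale over `K`. -/
theorem isSemisimpleRing_tensorProduct (K F D : Type*) [Field K] [Field F] [Algebra K F]
    [DivisionRing D] [Algebra K D] [FiniteDimensional K D]
    [Algebra.IsSeparable K (Subalgebra.center K D)] : IsSemisimpleRing (F ⊗[K] D) := by
  have := formallyEtale_center K D
  have := Algebra.FormallyUnramified.isReduced_of_field F (F ⊗[K] Subalgebra.center K D)
  have : IsArtinianRing (F ⊗[K] D) := .of_finite F _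
  rw [IsArtinianRing.isSemisimpleRing_iff_jacobson]
  by_contra hJ
  obtain ⟨x, hx, hx0, hc⟩ := exists_mem_commute (Ring.jacobson (F ⊗[K] D)) hJ
  obtain ⟨y, rfl⟩ := exists_map_center_eq K F D x hc
  obtain ⟨n, hn⟩ := IsSemiprimaryRing.isNilpotent (R := F ⊗[K] D)
  have hpow := Ideal.pow_mem_pow hx n
  rw [hn, ← map_pow] at hpow
  have hy : y ^ n = 0 := map_center_injective K F D (by simpa using hpow)
  exact hx0 (by rw [eq_zero_of_pow_eq_zero hy, map_zero])

/-- Over a separably closed `F`, the division algebras in the Wedderburn decomposition of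
`F ⊗[K] D` are central: a central element of one of them comes from `F ⊗[K] Z(D) ≃ Fⁿ`, hence is a
root of a polynomial that splits over `F`. -/
theorem exists_algEquiv_pi_matrix_of_isSepClosed (K F D : Type*) [Field K] [Field F] [Algebra K F] [IsSepClosed F]
    [DivisionRing D] [Algebra K D] [FiniteDimensional K D]
    [Algebra.IsSeparable K (Subalgebra.center K D)] :
    ∃ (m : ℕ) (n : Fin m → ℕ),
      Nonempty ((F ⊗[K] D) ≃ₐ[F] ((i : Fin m) → Matrix (Fin (n i)) (Fin (n i)) F)) := by
  have := isSemisimpleRing_tensorProduct K F D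
  have := formallyEtale_center K D
  obtain ⟨m, E, n, _, _, _, hn, ⟨e⟩⟩ :=
    IsSemisimpleRing.exists_algEquiv_pi_matrix_divisionRing_finite F (F ⊗[K] D)
  have hcen : ∀ i, Algebra.IsCentral F (E i) := by
    intro i
    refine ⟨fun z hz => ?_⟩
    rw [Subalgebra.mem_center_iff] at hz
    -- The central element of the product that is `z` in the `i`-th factor and `0` elsewhere.
    let w : (i : Fin m) → Matrix (Fin (n i)) (Fin (n i)) (E i) :=
      Pi.single i (Matrix.scalar _ z)
    have hw : ∀ v, v * w = w * v := by
      intro v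
      ext j : 1
      by_cases hj : j = i
      · subst hj
        simp only [w, Pi.mul_apply, Pi.single_eq_same]
        exact (Matrix.scalar_commute z (fun r => (hz r).symm) (v j)).symm.eq
      · simp [w, hj]
    obtain ⟨y, hy⟩ := exists_map_center_eq K F D (e.symm w) (fun d => by
      apply e.injective; simp [hw])
    obtain ⟨k, ⟨s⟩⟩ := Algebra.IsFiniteSplit.nonempty_algEquiv_fun F
      (F ⊗[K] Subalgebra.center K D)
    -- `p` annihilates `y`, hence `w`, hence `z`.
    let p : Polynomial F := ∏ j, (Polynomial.X - Polynomial.C (s y j))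
    have hp0 : p.Monic := Polynomial.monic_prod_of_monic _ _ fun j _ => Polynomial.monic_X_sub_C _
    have hpy : Polynomial.aeval y p = 0 := by
      apply s.injective
      rw [map_zero, ← Polynomial.aeval_algHom_apply s]
      ext j
      rw [Polynomial.aeval_pi_apply]
      simp [p, Finset.prod_eq_zero_iff, sub_eq_zero]
    have hpz : Polynomial.aeval z p = 0 := by
      have h1 : Polynomial.aeval w p = 0 := by
        rw [← e.apply_symm_apply w, ← hy, Polynomial.aeval_algHom_apply e,
          Polynomial.aeval_algHom_apply, hpy, map_zero, map_zero]
      have h2 : Polynomial.aeval (Matrix.scalarAlgHom (Fin (n i)) F z) p = 0 := by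
        have h3 : w i = Matrix.scalarAlgHom (Fin (n i)) F z := by simp [w]
        rw [← h3, ← congrFun (Polynomial.aeval_pi_apply w p) i, h1, Pi.zero_apply]
      rw [Polynomial.aeval_algHom_apply] at h2
      have := congrFun (congrFun h2 0) 0
      simpa using this
    have hint : IsIntegral F z := ⟨p, hp0, hpz⟩
    have hsp : (minpoly F z).Splits :=
      (Polynomial.Splits.prod fun j _ => Polynomial.Splits.X_sub_C _).of_dvd hp0.ne_zero
        (minpoly.dvd F z hpz)
    exact Algebra.mem_bot.mpr (minpoly.mem_range_of_degree_eq_one F z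
      (hsp.degree_eq_one_of_irreducible (minpoly.irreducible hint)))
  exact ⟨m, n, ⟨e.trans <| .piCongrRight fun i => .mapMatrix <| .symm <|
    .ofBijective (Algebra.ofId F (E i))
      ⟨(algebraMap F (E i)).injective, algebraMap_surjective_of_isCentral⟩⟩⟩

/-- Descent of a splitting from `Ω` to a subfield `L` containing the matrix entries of the image of
`D`: the splitting restricts to an injective `L`-algebra map, which is bijective for dimension
reasons. -/
theorem nonempty_algEquiv_of_entries_mem {K L Ω D : Type*} [Field K] [Field L] [Field Ω] [Algebra K L] [Algebra L Ω]
    [Algebra K Ω] [IsScalarTower K L Ω] [Ring D] [Algebra K D] [FiniteDimensional K D]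
    {m : ℕ} {n : Fin m → ℕ}
    (e : (Ω ⊗[K] D) ≃ₐ[Ω] ((i : Fin m) → Matrix (Fin (n i)) (Fin (n i)) Ω))
    (he : ∀ d i r s, e (1 ⊗ₜ d) i r s ∈ (algebraMap L Ω).range) :
    Nonempty ((L ⊗[K] D) ≃ₐ[L] ((i : Fin m) → Matrix (Fin (n i)) (Fin (n i)) L)) := by
  let ψ : ((i : Fin m) → Matrix (Fin (n i)) (Fin (n i)) L) →ₐ[L]
      ((i : Fin m) → Matrix (Fin (n i)) (Fin (n i)) Ω) :=
    AlgHom.pi fun i => (Algebra.ofId L Ω).mapMatrix.comp (Pi.evalAlgHom L _ i)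
  have hψ : Function.Injective ψ := by
    intro a b hab
    ext i r s
    exact (algebraMap L Ω).injective (congrFun (congrFun (congrFun hab i) r) s)
  let f : L ⊗[K] D →ₐ[L] ((i : Fin m) → Matrix (Fin (n i)) (Fin (n i)) Ω) :=
    (e.toAlgHom.restrictScalars L).comp
      (Algebra.TensorProduct.map (Algebra.ofId L Ω) (AlgHom.id K D))
  have hf : Function.Injective f := e.injective.comp
    (Module.Flat.rTensor_preserves_injective_linearMap (M := D)
      (IsScalarTower.toAlgHom K L Ω).toLinearMap (algebraMap L Ω).injective)
  have hrange : ∀ x, f x ∈ ψ.range := by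
    intro x
    induction x using TensorProduct.induction_on with
    | zero => rw [map_zero]; exact zero_mem _
    | add x y hx hy => rw [map_add]; exact add_mem hx hy
    | tmul a d =>
      have h1 : f (1 ⊗ₜ d) ∈ ψ.range := by
        choose g hg using he d
        refine ⟨fun i => Matrix.of (g i), ?_⟩
        ext i r s
        simpa [f, ψ, Algebra.ofId_apply] using hg i r s
      have h2 : (a ⊗ₜ[K] d : L ⊗[K] D) = a • (1 ⊗ₜ[K] d) := by
        rw [TensorProduct.smul_tmul', smul_eq_mul, mul_one]
      rw [h2, map_smul]
      exact Subalgebra.smul_mem _ h1 a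
  let φ : L ⊗[K] D →ₐ[L] ((i : Fin m) → Matrix (Fin (n i)) (Fin (n i)) L) :=
    (AlgEquiv.ofInjective ψ hψ).symm.toAlgHom.comp (f.codRestrict ψ.range hrange)
  have hφ : Function.Injective φ :=
    (AlgEquiv.ofInjective ψ hψ).symm.injective.comp
      (fun a b hab => hf (congrArg Subtype.val hab))
  have hdim : Module.finrank L (L ⊗[K] D) =
      Module.finrank L ((i : Fin m) → Matrix (Fin (n i)) (Fin (n i)) L) := by
    have h1 := e.toLinearEquiv.finrank_eq
    rw [Module.finrank_baseChange] at h1 ⊢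
    rw [h1]
    simp [Module.finrank_pi_fintype, Module.finrank_matrix]
  exact ⟨AlgEquiv.ofBijective φ
    ⟨hφ, (LinearMap.injective_iff_surjective_of_finrank_eq_finrank (f := φ.toLinearMap) hdim).mp hφ⟩⟩

set_option synthInstance.maxHeartbeats 1000000 in
set_option maxHeartbeats 1000000 in

/-- let `D` be a finite-dimensional division algebra over a field `K` whose center
is a separable extension of `K`.  Then there is a finite Galois extension `L/K` (inside an
algebraic closure of `K`) such that `L ⊗[K] D` is isomorphic, as an `L`-algebra, to a finite
product of matrix algebras over `L`. -/
theorem exists_galois_splitting_field (K : Type*) [Field K]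
    (D : Type*) [DivisionRing D] [Algebra K D] [FiniteDimensional K D]
    [Algebra.IsSeparable K (Subalgebra.center K D)] :
    ∃ L : IntermediateField K (AlgebraicClosure K),
      FiniteDimensional K L ∧ IsGalois K L ∧
      ∃ (m : ℕ) (n : Fin m → ℕ),
        Nonempty ((L ⊗[K] D) ≃ₐ[L] ((i : Fin m) → Matrix (Fin (n i)) (Fin (n i)) L)) := by
  have : IsSepClosed (separableClosure K (AlgebraicClosure K)) :=
    (separableClosure.isSepClosure K (AlgebraicClosure K)).sep_closed
  obtain ⟨m, n, ⟨e⟩⟩ := exists_algEquiv_pi_matrix_of_isSepClosed K (separableClosure K (AlgebraicClosure K)) D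
  -- The finitely many matrix entries of the images of a `K`-basis of `D`.
  let b := Module.finBasis K D
  let S : Set (AlgebraicClosure K) := Set.range
    fun t : Fin (Module.finrank K D) × (Σ i : Fin m, Fin (n i) × Fin (n i)) =>
      ((e (1 ⊗ₜ b t.1) t.2.1 t.2.2.1 t.2.2.2 : separableClosure K (AlgebraicClosure K)) :
        AlgebraicClosure K)
  let E := IntermediateField.adjoin K S
  have hEfin : FiniteDimensional K E := by
    have : Finite S := Set.finite_range _
    exact IntermediateField.finiteDimensional_adjoin fun x _ => Algebra.IsIntegral.isIntegral x
  have hEsep : Algebra.IsSeparable K E := by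
    rw [← le_separableClosure_iff, IntermediateField.adjoin_le_iff]
    rintro _ ⟨t, rfl⟩
    exact SetLike.coe_mem _
  let L := IntermediateField.normalClosure K E (AlgebraicClosure K)
  have hle : L ≤ separableClosure K (AlgebraicClosure K) := by
    refine normalClosure_le_iff.mpr fun f => ?_
    rintro _ ⟨y, rfl⟩
    exact mem_separableClosure_iff.mpr
      ((Algebra.IsSeparable.isSeparable K y).map f f.injective)
  have hgal : IsGalois K L := { to_isSeparable := (le_separableClosure_iff K _ L).mp hle }
  have hEL : E ≤ L := E.le_normalClosure
  let : Algebra L (separableClosure K (AlgebraicClosure K)) :=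
    (IntermediateField.inclusion hle).toAlgebra
  have : IsScalarTower K L (separableClosure K (AlgebraicClosure K)) :=
    .of_algebraMap_eq fun _ => rfl
  refine ⟨L, inferInstance, hgal, m, n, nonempty_algEquiv_of_entries_mem e fun d i r s => ?_⟩
  suffices h : ((e (1 ⊗ₜ d) i r s : separableClosure K (AlgebraicClosure K)) :
      AlgebraicClosure K) ∈ L from ⟨⟨_, h⟩, rfl⟩
  induction b.mem_span d using Submodule.span_induction with
  | mem x hx =>
    obtain ⟨j, rfl⟩ := hx
    exact hEL (IntermediateField.subset_adjoin K S ⟨⟨j, i, r, s⟩, rfl⟩)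
  | zero => simp
  | add x y _ _ hx hy =>
    rw [TensorProduct.tmul_add, map_add]
    exact add_mem hx hy
  | smul c x _ hx =>
    have h : e (1 ⊗ₜ (c • x)) = c • e (1 ⊗ₜ x) := by
      rw [TensorProduct.tmul_smul]
      exact map_smul (e.toAlgHom.restrictScalars K) c _
    rw [h]
    exact L.smul_mem hx
end
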